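/- For every n ≥ 1, the inclusion Glob^top(S^{n-1}) ↪ Glob^top(D^n) is a closed cofibration: writing G_D = Glob^top(D^n) and G_S = q(S^{n-1} × [0,1]) ⊆ G_D (the image of the boundary sphere, a closed subspace homeomorphic to Glob^top(S^{n-1})), the subspace (G_D × {0}) ∪ (G_S × [0,1]) is a retract of G_D × [0,1], i.e., there is a continuous map r : G_D × [0,1] → (G_D × {0}) ∪ (G_S × [0,1]) restricting to the identity on (G_D × {0}) ∪ (G_S × [0,1]). -/

import Mathlib

/-- The smallest equivalence relation on `Z × [0,1]` identifying `(z,0)` with `(z',0)`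
and `(z,1)` with `(z',1)` for all `z, z'`. -/
def globSetoid (Z : Type) [TopologicalSpace Z] : Setoid (Z × unitInterval) where
  r a b := a = b ∨ (a.2 = 0 ∧ b.2 = 0) ∨ (a.2 = 1 ∧ b.2 = 1)
  iseqv := by
    constructor
    · exact fun a => Or.inl rfl
    · rintro a b (rfl | ⟨h1, h2⟩ | ⟨h1, h2⟩)
      · exact Or.inl rfl
      · exact Or.inr (Or.inl ⟨h2, h1⟩)
      · exact Or.inr (Or.inr ⟨h2, h1⟩)
    · rintro a b c (rfl | ⟨h1, h2⟩ | ⟨h1, h2⟩) (rfl | ⟨h3, h4⟩ | ⟨h3, h4⟩) <;>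
        simp_all

/-- The globe `Glob^top(Z)`: the quotient of `Z × [0,1]` collapsing `Z × {0}` to a point
and `Z × {1}` to a point. -/
def GlobTop (Z : Type) [TopologicalSpace Z] : Type := Quotient (globSetoid Z)

/-- The quotient map `q : Z × [0,1] → Glob^top(Z)`. -/
def globQ (Z : Type) [TopologicalSpace Z] : Z × unitInterval → GlobTop Z :=
  Quotient.mk (globSetoid Z)

/-- `Glob^top(Z)` carries the quotient topology. -/
instance (Z : Type) [TopologicalSpace Z] : TopologicalSpace (GlobTop Z) :=
  TopologicalSpace.coinduced (globQ Z) inferInstance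

/-- The bottom point `⊥` of `Glob^top(Z)`, the common class of the points `(z,0)`. -/
noncomputable def globBot (Z : Type) [TopologicalSpace Z] [Nonempty Z] : GlobTop Z :=
  globQ Z (Classical.arbitrary Z, 0)

/-- The top point `⊤` of `Glob^top(Z)`, the common class of the points `(z,1)`. -/
noncomputable def globTop (Z : Type) [TopologicalSpace Z] [Nonempty Z] : GlobTop Z :=
  globQ Z (Classical.arbitrary Z, 1)

/-- The closed unit disk `D^n ⊆ ℝ^n`. -/
abbrev disk (n : ℕ) : Set (EuclideanSpace ℝ (Fin n)) := Metric.closedBall 0 1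

/-- `G_D = Glob^top(D^n)`. -/
abbrev GD (n : ℕ) : Type := GlobTop ↥(disk n)

/-- `G_S = q(S^{n-1} × [0,1]) ⊆ G_D`, the image of the boundary sphere part,
a closed subspace homeomorphic to `Glob^top(S^{n-1})`. -/
def GS (n : ℕ) : Set (GD n) :=
  {x | ∃ (z : ↥(disk n)) (t : unitInterval),
    (z : EuclideanSpace ℝ (Fin n)) ∈ Metric.sphere (0 : EuclideanSpace ℝ (Fin n)) 1 ∧
    x = globQ ↥(disk n) (z, t)}

/-- The subspace `(G_D × {0}) ∪ (G_S × [0,1])` of `G_D × [0,1]`. -/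
def mushroom (n : ℕ) : Set (GD n × unitInterval) :=
  {p | p.2 = 0 ∨ p.1 ∈ GS n}

/-!
Cofibrations are handled in Strøm's form: a closed `A ⊆ X` is cofibred exactly when some `u ≥ 0`
vanishing on `A` and some homotopy `H` of `X` fixing `A` satisfy `H (x, t) ∈ A` whenever `u x < t`.
Two such pairs `(u, H)` and `(v, K)` combine into `min u v` and
`(x, y, t) ↦ (H (x, min t (v y)), K (y, min t (u x)))`, which gives the product theorem; hence
`A × I ∪ Z × {0, 1}` is cofibred in `Z × I` as soon as `A` is in `Z`. The quotient map
`Z × I → Glob Z` identifies only points of `A × I ∪ Z × {0, 1}`, so the retraction of the cylinder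
descends; and as soon as `A` is nonempty, that subset has the same image in the globe as `A × I`.
-/

open Set Topology unitInterval

/-- The subspace `X × {0} ∪ A × I` of the cylinder `X × I`. -/
def cylinderMushroom {X : Type*} (A : Set X) : Set (X × I) :=
  {p | p.2 = 0 ∨ p.1 ∈ A}

/-- The inclusion of `A` in `X` is a closed cofibration. Instead of the homotopy extension property
we use the equivalent condition that `X × {0} ∪ A × I` is a retract of `X × I`, with the retraction
regarded as a self-map of `X × I`. -/
structure IsClosedCofibration {X : Type*} [TopologicalSpace X] (A : Set X) : Prop where
  isClosed : IsClosed A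
  exists_retraction : ∃ r : X × I → X × I,
    Continuous r ∧ (∀ p, r p ∈ cylinderMushroom A) ∧ ∀ p ∈ cylinderMushroom A, r p = p

namespace IsClosedCofibration

variable {X Y : Type*} [TopologicalSpace X] [TopologicalSpace Y] {A : Set X} {B : Set Y}

theorem empty : IsClosedCofibration (∅ : Set X) where
  isClosed := isClosed_empty
  exists_retraction := by
    refine ⟨fun p ↦ (p.1, 0), by fun_prop, fun p ↦ Or.inl rfl, ?_⟩
    rintro ⟨x, t⟩ ((rfl : t = 0) | hx)
    · rfl
    · exact hx.elim

theorem of_stromPair (hA : IsClosed A) {u : X → ℝ} {H : X × I → X}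
    (hu : Continuous u) (hH : Continuous H) (u_nonneg : ∀ x, 0 ≤ u x)
    (u_eq_zero : ∀ x ∈ A, u x = 0) (H_zero : ∀ x, H (x, 0) = x) (H_fix : ∀ x ∈ A, ∀ t, H (x, t) = x)
    (H_mem : ∀ x t, u x < (t : I) → H (x, t) ∈ A) : IsClosedCofibration A where
  isClosed := hA
  exists_retraction := by
    refine ⟨fun p ↦ (H p, projIcc 0 1 zero_le_one (p.2 - u p.1)), ?_, ?_, ?_⟩
    · exact hH.prodMk (continuous_projIcc.comp (by fun_prop))
    · rintro ⟨x, t⟩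
      rcases lt_or_ge (u x) t with h | h
      · exact Or.inr (H_mem x t h)
      · exact Or.inl (projIcc_of_le_left zero_le_one (sub_nonpos.2 h))
    · rintro ⟨x, t⟩ ((rfl : t = 0) | (hx : x ∈ A))
      · exact Prod.ext (H_zero x) (projIcc_of_le_left zero_le_one (by simpa using u_nonneg x))
      · refine Prod.ext (H_fix x hx t) ?_
        simp only [u_eq_zero x hx, sub_zero, projIcc_val]

/- `u x` is the largest distance `|r₂ (x, t) - t|`: if it is smaller than `t`, then `r₂ (x, t) ≠ 0`,
so the retraction must land in `A × I`. Since `A` is closed, the conclusion persists at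
`t = u x < 1`, which the product theorem needs where the two functions agree. -/
theorem exists_stromPair (hA : IsClosedCofibration A) :
    ∃ (u : X → I) (H : X × I → X), Continuous u ∧ Continuous H ∧ (∀ x ∈ A, u x = 0) ∧
      (∀ x, H (x, 0) = x) ∧ (∀ x ∈ A, ∀ t, H (x, t) = x) ∧
      ∀ x t, u x < 1 → u x ≤ t → H (x, t) ∈ A := by
  obtain ⟨r, hr, r_mem, r_fix⟩ := hA.exists_retraction
  let height : C(X, C(I, I)) := ContinuousMap.curry ⟨fun p ↦ (r p).2, by fun_prop⟩
  have dist_le_one (x : X) : dist (height x) (.id I) ≤ 1 :=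
    (ContinuousMap.dist_le zero_le_one).2 fun t ↦ Real.dist_le_of_mem_Icc_01 (height x t).2 t.2
  let u (x : X) : I := ⟨dist (height x) (.id I), dist_nonneg, dist_le_one x⟩
  have mem_of_lt (x : X) (t : I) (h : u x < t) : (r (x, t)).1 ∈ A := by
    refine (r_mem (x, t)).resolve_left fun h_zero ↦ h.not_ge ?_
    have h_dist : dist (r (x, t)).2 t ≤ u x :=
      ContinuousMap.dist_apply_le_dist (f := height x) (g := .id I) t
    rwa [h_zero, dist_comm, Subtype.dist_eq, Icc.coe_zero, Real.dist_0_eq_abs,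
      abs_of_nonneg t.2.1] at h_dist
  refine ⟨u, fun p ↦ (r p).1, ?_, by fun_prop, fun x hx ↦ ?_, fun x ↦ ?_, fun x hx t ↦ ?_, ?_⟩
  · exact Continuous.subtype_mk (by fun_prop) _
  · have : height x = .id I :=
      ContinuousMap.ext fun t ↦ congrArg Prod.snd (r_fix (x, t) (Or.inr hx))
    exact Subtype.ext (dist_eq_zero.2 this)
  · exact congrArg Prod.fst (r_fix (x, 0) (Or.inl rfl))
  · exact congrArg Prod.fst (r_fix (x, t) (Or.inr hx))
  · intro x t h_lt h_le
    have h_closed : IsClosed {t | (r (x, t)).1 ∈ A} := hA.isClosed.preimage (by fun_prop)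
    have h_closure : closure (Ioi (u x)) ⊆ {t | (r (x, t)).1 ∈ A} :=
      closure_minimal (mem_of_lt x) h_closed
    rw [closure_Ioi' (a := u x) ⟨1, h_lt⟩] at h_closure
    exact h_closure h_le

theorem prod (hA : IsClosedCofibration A) (hB : IsClosedCofibration B) :
    IsClosedCofibration (A ×ˢ univ ∪ univ ×ˢ B) := by
  obtain ⟨u, H, hu, hH, u_zero, H_zero, H_fix, H_mem⟩ := hA.exists_stromPair
  obtain ⟨v, K, hv, hK, v_zero, K_zero, K_fix, K_mem⟩ := hB.exists_stromPair
  refine of_stromPair (u := fun p ↦ (u p.1 ⊓ v p.2 : I))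
    (H := fun p ↦ (H (p.1.1, p.2 ⊓ v p.1.2), K (p.1.2, p.2 ⊓ u p.1.1)))
    ((hA.isClosed.prod isClosed_univ).union (isClosed_univ.prod hB.isClosed))
    (by fun_prop) (by fun_prop) (fun p ↦ (u p.1 ⊓ v p.2).2.1) ?_ ?_ ?_ ?_
  · rintro ⟨x, y⟩ (⟨hx, -⟩ | ⟨-, hy⟩)
    · simp [u_zero x hx]
    · simp [v_zero y hy]
  · rintro ⟨x, y⟩
    simp [H_zero, K_zero]
  · rintro ⟨x, y⟩ (⟨hx, -⟩ | ⟨-, hy⟩) t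
    · simp [H_fix x hx, u_zero x hx, K_zero]
    · simp [K_fix y hy, v_zero y hy, H_zero]
  · rintro ⟨x, y⟩ t (h : u x ⊓ v y < t)
    rcases le_total (u x) (v y) with h_le | h_le
    · rw [inf_eq_left.2 h_le] at h
      exact Or.inl ⟨H_mem x _ (h.trans_le le_one') (le_inf h.le h_le), trivial⟩
    · rw [inf_eq_right.2 h_le] at h
      exact Or.inr ⟨trivial, K_mem y _ (h.trans_le le_one') (le_inf h.le h_le)⟩

theorem image_of_isQuotientMap (hA : IsClosedCofibration A) {q : X → Y} (hq : IsQuotientMap q)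
    (h_inj : ∀ x x', q x = q x' → x = x' ∨ x ∈ A ∧ x' ∈ A) : IsClosedCofibration (q '' A) where
  isClosed := by
    have h_preimage : q ⁻¹' (q '' A) = A := by
      refine (subset_preimage_image q A).antisymm' ?_
      rintro x ⟨a, ha, hax⟩
      rcases h_inj a x hax with rfl | ⟨-, hx⟩
      exacts [ha, hx]
    rw [← hq.isClosed_preimage, h_preimage]
    exact hA.isClosed
  exists_retraction := by
    obtain ⟨r, hr, r_mem, r_fix⟩ := hA.exists_retraction
    let lift : Y → X := Function.surjInv hq.surjective
    let rq (p : Y × I) : Y × I := Prod.map q id (r (lift p.1, p.2))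
    have rq_apply (x : X) (t : I) : rq (q x, t) = Prod.map q id (r (x, t)) := by
      have h_eq : q (lift (q x)) = q x := Function.surjInv_eq hq.surjective (q x)
      rcases h_inj _ _ h_eq with h | ⟨h, hx⟩
      · simp only [rq, h]
      · have h_fix : r (lift (q x), t) = (lift (q x), t) := r_fix _ (Or.inr h)
        simp only [rq, h_fix, r_fix (x, t) (Or.inr hx), Prod.map_apply, h_eq]
    refine ⟨rq, hq.continuous_lift_prod_left ?_, ?_, ?_⟩
    · simp only [rq_apply]
      exact (hq.continuous.prodMap continuous_id).comp hr
    · rintro ⟨y, t⟩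
      exact (r_mem (_, t)).imp id (mem_image_of_mem q)
    · rintro ⟨y, t⟩ ((rfl : t = 0) | ⟨x, hx, rfl⟩)
      · obtain ⟨x, rfl⟩ := hq.surjective y
        rw [rq_apply, r_fix _ (Or.inl rfl), Prod.map_apply, id]
      · rw [rq_apply, r_fix _ (Or.inr hx), Prod.map_apply, id]

end IsClosedCofibration

theorem isClosedCofibration_sphere {E : Type*} [NormedAddCommGroup E] [NormedSpace ℝ E] :
    IsClosedCofibration {z : Metric.closedBall (0 : E) 1 | (z : E) ∈ Metric.sphere 0 1} := by
  have norm_le_one (z : Metric.closedBall (0 : E) 1) : ‖(z : E)‖ ≤ 1 :=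
    mem_closedBall_zero_iff.1 z.2
  -- `z / scale (z, t)` is the ball component of the projection of `(z, t)` from `(0, 2)` onto the
  -- bottom and the side of the cylinder.
  let scale (p : Metric.closedBall (0 : E) 1 × I) : ℝ := max ‖(p.1 : E)‖ (1 - p.2 / 2)
  have scale_pos (p) : 0 < scale p := lt_max_of_lt_right (by linarith [p.2.2.2])
  have norm_smul_scale (p) : ‖(scale p)⁻¹ • (p.1 : E)‖ = (scale p)⁻¹ * ‖(p.1 : E)‖ := by
    rw [norm_smul, norm_inv, Real.norm_of_nonneg (scale_pos p).le]
  have scale_eq_one {p} (h : ‖(p.1 : E)‖ = 1 ∨ p.2 = 0) : scale p = 1 := by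
    rcases h with h | h
    · exact max_eq_left (by linarith [p.2.2.1]) |>.trans h
    · simpa [scale, h] using norm_le_one p.1
  let expand (p : Metric.closedBall (0 : E) 1 × I) : Metric.closedBall (0 : E) 1 :=
    ⟨(scale p)⁻¹ • (p.1 : E), by
      rw [mem_closedBall_zero_iff, norm_smul_scale, inv_mul_le_one₀ (scale_pos p)]
      exact le_max_left _ _⟩
  have expand_eq {p} (h : ‖(p.1 : E)‖ = 1 ∨ p.2 = 0) : expand p = p.1 :=
    Subtype.ext (by simp only [expand, scale_eq_one h, inv_one, one_smul])
  refine .of_stromPair (u := fun z ↦ 2 * (1 - ‖(z : E)‖)) (H := expand)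
    (Metric.isClosed_sphere.preimage continuous_subtype_val) (by fun_prop) ?_ ?_ ?_ ?_ ?_ ?_
  · have scale_cont : Continuous scale := by fun_prop
    exact .subtype_mk ((scale_cont.inv₀ fun p ↦ (scale_pos p).ne').smul (by fun_prop)) _
  · exact fun z ↦ by linarith [norm_le_one z]
  · exact fun z hz ↦ by rw [mem_sphere_zero_iff_norm.1 hz]; norm_num
  · exact fun z ↦ expand_eq (Or.inr rfl)
  · exact fun z hz t ↦ expand_eq (Or.inl (mem_sphere_zero_iff_norm.1 hz))
  · intro z t h
    have scale_eq : scale (z, t) = ‖(z : E)‖ := max_eq_left (by dsimp only; linarith)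
    rw [mem_ofPred_eq, mem_sphere_zero_iff_norm, norm_smul_scale, ← scale_eq,
      inv_mul_cancel₀ (scale_pos _).ne']

theorem isClosedCofibration_unitInterval_endpoints : IsClosedCofibration ({0, 1} : Set I) := by
  let e : Metric.closedBall (0 : ℝ) 1 ≃ₜ I :=
    (Homeomorph.setCongr Real.closedBall_eq_Icc).trans (iccHomeoI (0 - 1) (0 + 1) (by norm_num))
  have e_sphere : e '' {z | (z : ℝ) ∈ Metric.sphere 0 1} = {0, 1} := by
    have e_symm (t : I) : (e.symm t : ℝ) = 2 * t - 1 := by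
      change (0 + 1 - (0 - 1)) * (t : ℝ) + (0 - 1) = _
      ring
    ext t
    rw [e.image_eq_preimage_symm, mem_preimage, mem_ofPred_eq, e_symm, mem_sphere_zero_iff_norm,
      Real.norm_eq_abs, abs_eq zero_le_one, or_comm, mem_insert_iff, mem_singleton_iff,
      Subtype.ext_iff, Subtype.ext_iff, Icc.coe_zero, Icc.coe_one]
    constructor <;> exact .imp (by intro; linarith) (by intro; linarith)
  rw [← e_sphere]
  exact isClosedCofibration_sphere.image_of_isQuotientMap e.isQuotientMap
    fun x x' h ↦ Or.inl (e.injective h)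

section Globe

variable {Z : Type} [TopologicalSpace Z] {A : Set Z}

theorem globQ_eq_globQ_iff {a b : Z × I} :
    globQ Z a = globQ Z b ↔ a = b ∨ (a.2 = 0 ∧ b.2 = 0) ∨ (a.2 = 1 ∧ b.2 = 1) :=
  Quotient.eq (r := globSetoid Z)

theorem isQuotientMap_globQ : IsQuotientMap (globQ Z) :=
  ⟨⟨rfl⟩, Quotient.mk_surjective⟩

theorem globQ_image_prod_union_endpoints (hA : A.Nonempty) :
    globQ Z '' (A ×ˢ univ ∪ univ ×ˢ {0, 1}) = globQ Z '' (A ×ˢ univ) := by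
  obtain ⟨a, ha⟩ := hA
  refine (image_mono subset_union_left).antisymm' ?_
  rintro _ ⟨⟨z, t⟩, h | ⟨-, ht⟩, rfl⟩
  · exact mem_image_of_mem _ h
  · refine ⟨(a, t), ⟨ha, trivial⟩, globQ_eq_globQ_iff.2 (Or.inr ?_)⟩
    exact ht.imp (fun h ↦ ⟨h, h⟩) (fun h ↦ ⟨h, h⟩)

theorem glob_sphere_disk_cofibration_general (hA : IsClosedCofibration A) :
    IsClosedCofibration (globQ Z '' (A ×ˢ univ)) := by
  rcases A.eq_empty_or_nonempty with rfl | h_nonempty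
  · simpa only [empty_prod, image_empty] using IsClosedCofibration.empty
  · rw [← globQ_image_prod_union_endpoints h_nonempty]
    refine (hA.prod isClosedCofibration_unitInterval_endpoints).image_of_isQuotientMap
      isQuotientMap_globQ fun x x' h ↦ ?_
    refine (globQ_eq_globQ_iff.1 h).imp_right ?_
    rintro (⟨h, h'⟩ | ⟨h, h'⟩) <;> simp [h, h']

end Globe

theorem GS_eq_image (n : ℕ) :
    GS n = globQ (disk n) '' ({z : disk n | z.1 ∈ Metric.sphere 0 1} ×ˢ univ) := by
  ext x
  constructor
  · rintro ⟨z, t, hz, rfl⟩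
    exact mem_image_of_mem _ ⟨hz, trivial⟩
  · rintro ⟨⟨z, t⟩, ⟨hz, -⟩, rfl⟩
    exact ⟨z, t, hz, rfl⟩

/-- for every `n ≥ 1`, the inclusion `Glob^top(S^{n-1}) ↪ Glob^top(D^n)` is a
closed cofibration: `(G_D × {0}) ∪ (G_S × [0,1])` is a retract of `G_D × [0,1]`. -/
theorem glob_sphere_disk_cofibration (n : ℕ) (hn : 1 ≤ n) :
    ∃ r : GD n × unitInterval → GD n × unitInterval,
      Continuous r ∧ (∀ p, r p ∈ mushroom n) ∧ (∀ p ∈ mushroom n, r p = p) :=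
  (GS_eq_image n ▸ glob_sphere_disk_cofibration_general isClosedCofibration_sphere :
    IsClosedCofibration (GS n)).exists_retraction
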